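/- Let (X_n) be a random walk in periodic environment on Z^d. Suppose the induced Markov chain ξ_n on the torus T is irreducible and aperiodic, and that Σ_{y∈Z^d} |y|^2 p_x(y) < ∞ for every x ∈ T. Then (X_n − nν)/√n converges in distribution, as n → ∞, to the centered d-dimensional Gaussian law N(0, Σ), where Σ_{ij} := Σ_{x∈T} π(x) Σ_{y∈Z^d} p_x(y)(y_i − ν_i)(y_j − ν_j) + 2 Σ_{n=1}^∞ Σ_{x,y,z,w∈T} π(x) P_{xy} ((μ_{xy})_i − ν_i) (P^{n−1})_{yz} P_{zw} ((μ_{zw})_j − ν_j), the series being convergent. -/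

import Mathlib

open MeasureTheory Filter Topology ProbabilityTheory

noncomputable section

/-- The torus `T = ℤ^d / (M₁ℤ × ⋯ × M_dℤ)`. -/
abbrev Torus (d : ℕ) (Md : Fin d → ℕ) : Type := ∀ i : Fin d, ZMod (Md i)

/-- Projection of `ℤ^d` onto the torus, `x ↦ x mod M`. -/
def projT {d : ℕ} (Md : Fin d → ℕ) (x : Fin d → ℤ) : Torus d Md :=
  fun i => (x i : ZMod (Md i))

/-- A canonical representative in `ℤ^d` of a point of the torus. -/
def repT {d : ℕ} (Md : Fin d → ℕ) [∀ i, NeZero (Md i)] (t : Torus d Md) : Fin d → ℤ :=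
  fun i => ((t i).val : ℤ)

/-- `p` is a periodic environment on `ℤ^d`: each `p x` is a probability distribution
on `ℤ^d` (the jump distribution at `x`), and `x ↦ p x` is `M`-periodic. -/
def IsPeriodicEnv {d : ℕ} (Md : Fin d → ℕ) (p : (Fin d → ℤ) → (Fin d → ℤ) → ℝ) : Prop :=
  (∀ x y, 0 ≤ p x y) ∧ (∀ x, HasSum (p x) 1) ∧
    ∀ (x y : Fin d → ℤ) (i : Fin d), p (x + Pi.single i (Md i : ℤ)) y = p x y

/-- The transition matrix of the induced Markov chain on the torus:
`P a b = ∑_{z : ℤ^d, a + z ∼ b} p_a(z)` (the jump `z` leads from the class `a`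
to the class `b` iff `a + (z mod M) = b`). -/
def indMatrix {d : ℕ} (Md : Fin d → ℕ) [∀ i, NeZero (Md i)]
    (p : (Fin d → ℤ) → (Fin d → ℤ) → ℝ) : Matrix (Torus d Md) (Torus d Md) ℝ :=
  Matrix.of fun a b => ∑' z : Fin d → ℤ, if a + projT Md z = b then p (repT Md a) z else 0

/-- Irreducibility of a finite-state transition matrix: every state can be reached
from every state with positive probability in finitely many (positively many) steps. -/
def MatIrreducible {T : Type*} [Fintype T] [DecidableEq T] (P : Matrix T T ℝ) : Prop :=
  ∀ a b : T, ∃ n : ℕ, 0 < n ∧ 0 < (P ^ n) a b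

/-- Aperiodicity of a finite-state transition matrix: for every state, the gcd of
the possible return times is `1`. -/
def MatAperiodic {T : Type*} [Fintype T] [DecidableEq T] (P : Matrix T T ℝ) : Prop :=
  ∀ a : T, ∀ m : ℕ, (∀ n : ℕ, 0 < n → 0 < (P ^ n) a a → m ∣ n) → m = 1

/-- `π` is a stationary probability distribution for the transition matrix `P`. -/
def IsStationaryDist {T : Type*} [Fintype T] (P : Matrix T T ℝ) (π : T → ℝ) : Prop :=
  (∀ a, 0 ≤ π a) ∧ (∑ a, π a = 1) ∧ ∀ b, ∑ a, π a * P a b = π b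

/-- The drift vector `ν = ∑_{x ∈ T} π(x) ∑_{y ∈ ℤ^d} p_x(y) y`. -/
def driftVec {d : ℕ} (Md : Fin d → ℕ) [∀ i, NeZero (Md i)]
    (p : (Fin d → ℤ) → (Fin d → ℤ) → ℝ) (π : Torus d Md → ℝ) : Fin d → ℝ :=
  fun i => ∑ a : Torus d Md, π a * ∑' y : Fin d → ℤ, p (repT Md a) y * (y i : ℝ)

/-- `μ` is the law of the random walk in the environment `p` started at `x₀`,
as a probability measure on trajectory space: the probability of every cylinder set
is the corresponding product of one-step transition probabilities. -/
def IsRWPELaw {d : ℕ} (p : (Fin d → ℤ) → (Fin d → ℤ) → ℝ) (x₀ : Fin d → ℤ)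
    (μ : Measure (ℕ → (Fin d → ℤ))) : Prop :=
  IsProbabilityMeasure μ ∧
    ∀ (n : ℕ) (x : ℕ → (Fin d → ℤ)),
      μ {ω | ∀ i ≤ n, ω i = x i} =
        ENNReal.ofReal ((if x 0 = x₀ then (1 : ℝ) else 0) *
          ∏ i ∈ Finset.range n, p (x i) (x (i + 1) - x i))

/-- `e` is one of the `2d` unit vectors of `ℤ^d`. -/
def IsUnitVec {d : ℕ} (e : Fin d → ℤ) : Prop :=
  ∃ i : Fin d, e = Pi.single i 1 ∨ e = -Pi.single i 1

/-- The environment is nearest neighbour: only jumps to nearest neighbours have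
positive probability. -/
def IsNearestNeighbour {d : ℕ} (p : (Fin d → ℤ) → (Fin d → ℤ) → ℝ) : Prop :=
  ∀ x y, p x y ≠ 0 → IsUnitVec y

/-- The average negative gradient `g` of the potential,
`g_i = (1/M_i) ∑_{j=0}^{M_i - 1} log (p_{j eᵢ}(eᵢ) / p_{(j+1) eᵢ}(-eᵢ))`. -/
def avgNegGrad {d : ℕ} (Md : Fin d → ℕ) (p : (Fin d → ℤ) → (Fin d → ℤ) → ℝ) :
    Fin d → ℝ :=
  fun i => (Md i : ℝ)⁻¹ * ∑ j ∈ Finset.range (Md i),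
    Real.log (p (Pi.single i (j : ℤ)) (Pi.single i 1) /
      p (Pi.single i ((j : ℤ) + 1)) (-Pi.single i 1))

/-- The conditional expected jump `μ_{xy}` of the walk, given that the induced chain
jumps from `x` to `y`. -/
def condJump {d : ℕ} (Md : Fin d → ℕ) [∀ i, NeZero (Md i)]
    (p : (Fin d → ℤ) → (Fin d → ℤ) → ℝ) (a b : Torus d Md) : Fin d → ℝ :=
  if indMatrix Md p a b = 0 then 0
  else fun i =>
    (∑' z : Fin d → ℤ, if a + projT Md z = b then p (repT Md a) z * (z i : ℝ) else 0) /
      indMatrix Md p a b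

/-- The `n`-th term of the correlation series appearing in the asymptotic covariance
matrix: `∑_{x,y,z,w ∈ T} π(x) P_{xy} ((μ_{xy})_i - ν_i) (Pⁿ)_{yz} P_{zw} ((μ_{zw})_j - ν_j)`
(so that summing over `n ≥ 0` corresponds to summing `(P^{n-1})_{yz}` over `n ≥ 1`). -/
def covSeriesTerm {d : ℕ} (Md : Fin d → ℕ) [∀ i, NeZero (Md i)]
    (p : (Fin d → ℤ) → (Fin d → ℤ) → ℝ) (π : Torus d Md → ℝ) (n : ℕ) (i j : Fin d) : ℝ :=
  ∑ x : Torus d Md, ∑ y : Torus d Md, ∑ z : Torus d Md, ∑ w : Torus d Md,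
    π x * indMatrix Md p x y * (condJump Md p x y i - driftVec Md p π i) *
      ((indMatrix Md p) ^ n) y z * indMatrix Md p z w *
        (condJump Md p z w j - driftVec Md p π j)

/-- The asymptotic covariance matrix
`Σ_{ij} = ∑_{x∈T} π(x) ∑_y p_x(y) (y_i - ν_i)(y_j - ν_j) + 2 ∑_{n≥1} (correlation terms)`. -/
def covSigma {d : ℕ} (Md : Fin d → ℕ) [∀ i, NeZero (Md i)]
    (p : (Fin d → ℤ) → (Fin d → ℤ) → ℝ) (π : Torus d Md → ℝ) (i j : Fin d) : ℝ :=
  (∑ a : Torus d Md, π a * ∑' y : Fin d → ℤ,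
      p (repT Md a) y * ((y i : ℝ) - driftVec Md p π i) * ((y j : ℝ) - driftVec Md p π j)) +
    2 * ∑' n : ℕ, covSeriesTerm Md p π n i j

/-!
Let `y = ⟨t, z - ν⟩` be the centred increment of the walk in the direction `t`. Periodicity turns
the characteristic function of `⟨t, Xₙ - nν⟩` at `θ` into an entry of `A_θⁿ 1`, where `A_θ` is the
transition matrix of the induced chain with each jump weighted by `exp (iθy)`, a contraction for
the sup norm. The second moments give `A_θ = P + iθQ - (θ²/2)R + o(θ²)`. Two Poisson equations,
solvable because the induced chain mixes geometrically, provide vectors `u` and `w` such that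
`1 + iθu + θ²w` is an eigenvector of `A_θ` for the eigenvalue `1 - σ²θ²/2`, up to `o(θ²)`. As `A_θ`
is a contraction, `n` applications at `θ = s / √n` accumulate an error of only `n · o(1/n)`, hence
`A_θⁿ 1 → exp (-σ²s²/2)`, and Lévy's continuity theorem concludes.
-/

open Asymptotics
open scoped Matrix

section StochasticMatrix

variable {T : Type*} [Fintype T] {P : Matrix T T ℝ} {π g : T → ℝ}

lemma IsStationaryDist.vecMul_eq_self (hπ : IsStationaryDist P π) : π ᵥ* P = π :=
  funext hπ.2.2

lemma IsStationaryDist.le_one (hπ : IsStationaryDist P π) (a : T) : π a ≤ 1 :=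
  hπ.2.1 ▸ Finset.single_le_sum (fun b _ => hπ.1 b) (Finset.mem_univ a)

variable [DecidableEq T]

lemma pow_apply_nonneg (h0 : ∀ a b, 0 ≤ P a b) (n : ℕ) (a b : T) : 0 ≤ (P ^ n) a b := by
  induction n generalizing b with
  | zero => rw [pow_zero, Matrix.one_apply]; split_ifs <;> norm_num
  | succ n ih =>
    rw [pow_succ, Matrix.mul_apply]
    exact Finset.sum_nonneg fun c _ => mul_nonneg (ih c) (h0 c b)

lemma pow_add_apply_pos (h0 : ∀ a b, 0 ≤ P a b) {m n : ℕ} {a b c : T}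
    (hab : 0 < (P ^ m) a b) (hbc : 0 < (P ^ n) b c) : 0 < (P ^ (m + n)) a c := by
  rw [pow_add, Matrix.mul_apply]
  exact (mul_pos hab hbc).trans_le <| Finset.single_le_sum (f := fun j => (P ^ m) a j * (P ^ n) j c)
    (fun j _ => mul_nonneg (pow_apply_nonneg h0 _ _ _) (pow_apply_nonneg h0 _ _ _))
    (Finset.mem_univ b)

lemma eventually_pow_apply_self_pos (h0 : ∀ a b, 0 ≤ P a b) {a : T}
    (haper : ∀ m : ℕ, (∀ n : ℕ, 0 < n → 0 < (P ^ n) a a → m ∣ n) → m = 1) :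
    ∀ᶠ n in atTop, 0 < (P ^ n) a a := by
  let s : Set ℕ := {n | 0 < n ∧ 0 < (P ^ n) a a}
  have hgcd : Nat.setGcd s = 1 :=
    haper _ fun n hn hpos => Nat.setGcd_dvd_of_mem ⟨hn, hpos⟩
  obtain ⟨N, hN⟩ := Nat.exists_mem_closure_of_ge s
  filter_upwards [eventually_ge_atTop N] with n hn
  have hmem : n ∈ AddSubmonoid.closure s := hN n hn (hgcd ▸ one_dvd _)
  clear hn
  induction hmem using AddSubmonoid.closure_induction with
  | mem _ hx => exact hx.2
  | zero => simp
  | add _ _ _ _ hx hy => exact pow_add_apply_pos h0 hx hy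

lemma isPrimitive_of_irreducible_of_aperiodic (h0 : ∀ a b, 0 ≤ P a b)
    (hirr : MatIrreducible P) (haper : MatAperiodic P) : P.IsPrimitive := by
  have hpos : ∀ a b, ∀ᶠ n in atTop, 0 < (P ^ n) a b := fun a b => by
    obtain ⟨k, -, hk⟩ := hirr a b
    filter_upwards [eventually_ge_atTop k,
      (tendsto_sub_atTop_nat k).eventually (eventually_pow_apply_self_pos h0 (haper a))]
      with n hkn hn
    simpa [Nat.sub_add_cancel hkn] using pow_add_apply_pos h0 hn hk
  obtain ⟨n, hn0, hn⟩ := ((eventually_gt_atTop 0).and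
    (eventually_all.2 fun a => eventually_all.2 (hpos a))).exists
  exact ⟨h0, n, hn0, hn⟩

/-- Doeblin's condition: every row of some power of `P` dominates a fixed positive multiple of
`π`. It quantifies the mixing of the Markov chain with transition matrix `P` and stationary
distribution `π`; unlike irreducibility, it allows transient states. -/
def SatisfiesDoeblin (P : Matrix T T ℝ) (π : T → ℝ) : Prop :=
  ∃ N : ℕ, ∃ δ > 0, ∀ a b, δ * π b ≤ (P ^ N) a b

lemma SatisfiesDoeblin.of_isPrimitive (hP : P.IsPrimitive) (hπ : ∀ a, π a ≤ 1) :
    SatisfiesDoeblin P π := by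
  obtain ⟨N, -, hN⟩ := hP.exists_pos_pow
  have hδ : ∀ᶠ δ in 𝓝[>] (0 : ℝ), ∀ a b, δ ≤ (P ^ N) a b :=
    eventually_all.2 fun a => eventually_all.2 fun b =>
      eventually_nhdsWithin_of_eventually_nhds (eventually_le_nhds (hN a b))
  obtain ⟨δ, hδ, hδ0⟩ := (hδ.and self_mem_nhdsWithin).exists
  exact ⟨N, δ, hδ0, fun a b =>
    (mul_le_of_le_one_right (le_of_lt hδ0) (hπ b)).trans (hδ a b)⟩

lemma norm_mulVec_le {m n 𝕜 : Type*} [Fintype m] [Fintype n] [NonUnitalSeminormedRing 𝕜]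
    {A : Matrix m n 𝕜} {r : ℝ} (hr : 0 ≤ r) (hA : ∀ a, ∑ b, ‖A a b‖ ≤ r) (v : n → 𝕜) :
    ‖A *ᵥ v‖ ≤ r * ‖v‖ := by
  refine (pi_norm_le_iff_of_nonneg (by positivity)).2 fun a => ?_
  calc ‖(A *ᵥ v) a‖ ≤ ∑ b, ‖A a b‖ * ‖v‖ :=
        norm_sum_le_of_le _ fun b _ =>
          (norm_mul_le _ _).trans (mul_le_mul_of_nonneg_left (norm_le_pi_norm v b) (norm_nonneg _))
    _ ≤ r * ‖v‖ := by
        rw [← Finset.sum_mul]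
        exact mul_le_mul_of_nonneg_right (hA a) (norm_nonneg v)

-- Subtracting the minorizing part `δ • 1 ⊗ π` from `P ^ N` does not change its action on `h`.
lemma norm_pow_mulVec_le_of_minorized (hP : P ∈ Matrix.rowStochastic ℝ T) (hπ : ∑ a, π a = 1)
    {N : ℕ} {δ : ℝ} (hδ : ∀ a b, δ * π b ≤ (P ^ N) a b) {h : T → ℝ} (hh : π ⬝ᵥ h = 0) :
    ‖P ^ N *ᵥ h‖ ≤ (1 - δ) * ‖h‖ := by
  let K : Matrix T T ℝ := Matrix.of fun a b => (P ^ N) a b - δ * π b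
  have hrow : ∀ a, ∑ b, K a b = 1 - δ := fun a => by
    simp [K, Finset.sum_sub_distrib, ← Finset.mul_sum, hπ,
      Matrix.sum_row_of_mem_rowStochastic (pow_mem hP N) a]
  have hnorm : ∀ a, ∑ b, ‖K a b‖ = 1 - δ := fun a => by
    rw [← hrow a]
    exact Finset.sum_congr rfl fun b _ => Real.norm_of_nonneg (sub_nonneg.2 (hδ a b))
  have hact : P ^ N *ᵥ h = K *ᵥ h := by
    ext a
    have h0 : ∑ b, δ * π b * h b = 0 := by
      simpa [dotProduct, Finset.mul_sum, mul_assoc] using congrArg (δ * ·) hh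
    simp [K, Matrix.mulVec, dotProduct, sub_mul, Finset.sum_sub_distrib, h0]
  have : Nonempty T := by
    by_contra hT
    have := not_nonempty_iff.1 hT
    simp at hπ
  have hr : 0 ≤ 1 - δ :=
    hnorm (Classical.arbitrary T) ▸ Finset.sum_nonneg fun _ _ => norm_nonneg _
  rw [hact]
  exact norm_mulVec_le hr (fun a => (hnorm a).le) h

lemma summable_of_add_le_mul {a : ℕ → ℝ} {r : ℝ} {N : ℕ} (h0 : ∀ n, 0 ≤ a n) (hr : r < 1)
    (h : ∀ n, a (N + n) ≤ r * a n) : Summable a := by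
  refine summable_of_sum_range_le (c := (∑ n ∈ Finset.range N, a n) / (1 - r)) h0 fun m => ?_
  have hsplit : ∑ n ∈ Finset.range m, a n ≤
      ∑ n ∈ Finset.range N, a n + r * ∑ n ∈ Finset.range m, a n :=
    calc ∑ n ∈ Finset.range m, a n ≤ ∑ n ∈ Finset.range (N + m), a n :=
          Finset.sum_le_sum_of_subset_of_nonneg (Finset.range_mono (by lia)) fun i _ _ => h0 i
      _ = ∑ n ∈ Finset.range N, a n + ∑ n ∈ Finset.range m, a (N + n) := Finset.sum_range_add ..
      _ ≤ ∑ n ∈ Finset.range N, a n + r * ∑ n ∈ Finset.range m, a n := by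
          rw [Finset.mul_sum]
          gcongr
          exact h _
  rw [le_div_iff₀ (by linarith)]
  linarith

lemma dotProduct_pow_mulVec (hπ : π ᵥ* P = π) (n : ℕ) (g : T → ℝ) :
    π ⬝ᵥ (P ^ n *ᵥ g) = π ⬝ᵥ g := by
  induction n with
  | zero => simp
  | succ n ih => rw [pow_succ', ← Matrix.mulVec_mulVec, Matrix.dotProduct_mulVec, hπ, ih]

lemma summable_pow_mulVec (hP : P ∈ Matrix.rowStochastic ℝ T) (hπ : IsStationaryDist P π)
    (hPπ : SatisfiesDoeblin P π) (hg : π ⬝ᵥ g = 0) : Summable fun n : ℕ => P ^ n *ᵥ g := by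
  obtain ⟨N, δ, hδ0, hδ⟩ := hPπ
  refine .of_norm (summable_of_add_le_mul (N := N) (fun _ => norm_nonneg _) (sub_lt_self 1 hδ0)
    fun n => ?_)
  rw [pow_add, ← Matrix.mulVec_mulVec]
  exact norm_pow_mulVec_le_of_minorized hP hπ.2.1 hδ
    ((dotProduct_pow_mulVec (hπ.vecMul_eq_self) n g).trans hg)

/-- The potential `∑ₙ Pⁿ g` of the charge `g`, which solves the Poisson equation `h - P h = g`
when the series converges. -/
def potential (P : Matrix T T ℝ) (g : T → ℝ) : T → ℝ := ∑' n : ℕ, P ^ n *ᵥ g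

lemma hasSum_mulVec_pow_mulVec (hg : Summable fun n : ℕ => P ^ n *ᵥ g) (A : Matrix T T ℝ) :
    HasSum (fun n : ℕ => A *ᵥ (P ^ n *ᵥ g)) (A *ᵥ potential P g) :=
  (Matrix.mulVecLin A).toContinuousLinearMap.hasSum hg.hasSum

lemma mulVec_potential_add (hg : Summable fun n : ℕ => P ^ n *ᵥ g) :
    P *ᵥ potential P g + g = potential P g := by
  rw [← (hasSum_mulVec_pow_mulVec hg P).tsum_eq, potential, hg.tsum_eq_zero_add, add_comm]
  simp only [pow_zero, Matrix.one_mulVec, pow_succ', Matrix.mulVec_mulVec]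

end StochasticMatrix

section QuasiEigenvector

variable {E : Type*} [NormedAddCommGroup E] [NormedSpace ℂ E]

lemma norm_pow_apply_sub_le {L : Module.End ℂ E} (hL : ∀ x, ‖L x‖ ≤ ‖x‖) {z : ℂ} {r ε : ℝ}
    (hr : 1 ≤ r) (hz : ‖z‖ ≤ r) {v : E} (hv : ‖L v - z • v‖ ≤ ε) (n : ℕ) :
    ‖(L ^ n) v - z ^ n • v‖ ≤ n * ε * r ^ n := by
  induction n with
  | zero => simp
  | succ n ih =>
    have hε : 0 ≤ ε := (norm_nonneg _).trans hv
    have hsplit : (L ^ (n + 1)) v - z ^ (n + 1) • v =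
        L ((L ^ n) v - z ^ n • v) + z ^ n • (L v - z • v) := by
      simp only [pow_succ', Module.End.mul_apply, map_sub, map_smul, smul_sub, mul_smul]
      rw [smul_comm z (z ^ n) v]
      abel
    calc ‖(L ^ (n + 1)) v - z ^ (n + 1) • v‖
        ≤ n * ε * r ^ n + r ^ n * ε := by
          rw [hsplit]
          refine norm_add_le_of_le ((hL _).trans ih) ?_
          rw [norm_smul, norm_pow]
          gcongr
      _ = (n + 1 : ℕ) * ε * r ^ n := by push_cast; ring
      _ ≤ (n + 1 : ℕ) * ε * r ^ (n + 1) := by gcongr; simp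

lemma tendsto_pow_apply_of_tendsto_mul {L : ℕ → Module.End ℂ E} (hL : ∀ n x, ‖L n x‖ ≤ ‖x‖)
    {z : ℕ → ℂ} {a : ℂ} (hz : Tendsto (fun n : ℕ => n * (z n - 1)) atTop (𝓝 a))
    {v : ℕ → E} {e : E} (hve : Tendsto v atTop (𝓝 e))
    (hv : Tendsto (fun n : ℕ => n * ‖L n (v n) - z n • v n‖) atTop (𝓝 0)) :
    Tendsto (fun n => (L n ^ n) e) atTop (𝓝 (Complex.exp a • e)) := by
  have hLpow : ∀ m n x, ‖(L n ^ m) x‖ ≤ ‖x‖ := fun m n => by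
    induction m with
    | zero => simp
    | succ m ih => exact fun x => by simpa [pow_succ'] using (hL n _).trans (ih x)
  have hpow : Tendsto (fun n => z n ^ n) atTop (𝓝 (Complex.exp a)) := by
    simpa using Complex.tendsto_one_add_pow_exp_of_tendsto hz
  have hbound : Tendsto (fun n => (1 + ‖z n - 1‖) ^ n) atTop (𝓝 (Real.exp ‖a‖)) :=
    Real.tendsto_one_add_pow_exp_of_tendsto (by simpa using hz.norm)
  have hquasi : Tendsto (fun n => (L n ^ n) (v n) - z n ^ n • v n) atTop (𝓝 0) := by
    refine squeeze_zero_norm (fun n => ?_) (by simpa using hv.mul hbound)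
    refine norm_pow_apply_sub_le (hL n) (by simp) ?_ le_rfl n
    simpa using norm_add_le 1 (z n - 1)
  have hshift : Tendsto (fun n => (L n ^ n) (e - v n)) atTop (𝓝 0) :=
    squeeze_zero_norm (fun n => hLpow n n _) (by simpa using (hve.const_sub e).norm)
  simpa using (hshift.add hquasi).add (hpow.smul hve)

lemma tendsto_pow_apply_of_quasiEigenvector {A : ℝ → Module.End ℂ E}
    (hA : ∀ θ x, ‖A θ x‖ ≤ ‖x‖) {v : ℝ → E} {e : E} {c : ℂ} (hve : Tendsto v (𝓝 0) (𝓝 e))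
    (hv : (fun θ : ℝ => A θ (v θ) - (1 - c * θ ^ 2) • v θ) =o[𝓝 0] fun θ : ℝ => θ ^ 2) (s : ℝ) :
    Tendsto (fun n : ℕ => (A (s / √n) ^ n) e) atTop (𝓝 (Complex.exp (-(c * s ^ 2)) • e)) := by
  have hθ : Tendsto (fun n : ℕ => s / √n) atTop (𝓝 0) :=
    (Real.tendsto_sqrt_atTop.comp tendsto_natCast_atTop_atTop).const_div_atTop s
  have hsq : (fun n : ℕ => n * (s / √n) ^ 2) =ᶠ[atTop] fun _ => s ^ 2 := by
    filter_upwards [eventually_ne_atTop 0] with n hn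
    rw [div_pow, Real.sq_sqrt n.cast_nonneg]
    field_simp
  refine tendsto_pow_apply_of_tendsto_mul (fun n => hA (s / √n))
    (z := fun n => 1 - c * ((s / √n : ℝ) : ℂ) ^ 2) ?_ (hve.comp hθ) ?_
  · refine tendsto_const_nhds.congr' ?_
    filter_upwards [hsq] with n hn
    rw [← Complex.ofReal_pow s, ← hn]
    push_cast
    ring
  · have hlittle := (isBigO_refl (fun n : ℕ => (n : ℝ)) atTop).mul_isLittleO
      (hv.comp_tendsto hθ).norm_left
    exact (isLittleO_one_iff ℝ).1
      (hlittle.trans_isBigO (hsq.trans_isBigO (isBigO_const_const _ one_ne_zero _)))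

lemma isLittleO_quasiEigenvector {A : ℝ → Module.End ℂ E} {P Q R : Module.End ℂ E}
    (hA : ∀ x, (fun θ : ℝ => A θ x - (P x + (θ : ℂ) • Q x + (θ : ℂ) ^ 2 • R x))
      =o[𝓝 0] fun θ : ℝ => θ ^ 2) {e u w : E} {c : ℂ} (he : P e = e) (hu : P u + Q e = u)
    (hw : P w + Q u + R e = w - c • e) :
    (fun θ : ℝ => A θ (e + (θ : ℂ) • u + (θ : ℂ) ^ 2 • w)
      - (1 - c * θ ^ 2) • (e + (θ : ℂ) • u + (θ : ℂ) ^ 2 • w)) =o[𝓝 0] fun θ : ℝ => θ ^ 2 := by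
  have hpow : ∀ k > 2, ∀ x : E, (fun θ : ℝ => (θ : ℂ) ^ k • x) =o[𝓝 0] fun θ : ℝ => θ ^ 2 :=
    fun k hk x => by
      refine IsBigO.trans_isLittleO (.of_bound ‖x‖ (.of_forall fun θ => ?_))
        (isLittleO_pow_pow hk)
      simp [norm_smul, mul_comm]
  have hsmul : ∀ k (x : E), (fun θ : ℝ => (θ : ℂ) ^ k •
      (A θ x - (P x + (θ : ℂ) • Q x + (θ : ℂ) ^ 2 • R x))) =o[𝓝 0] fun θ : ℝ => θ ^ 2 :=
    fun k x => by
      have h1 : (fun θ : ℝ => (θ : ℂ) ^ k) =O[𝓝 0] fun _ => (1 : ℝ) :=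
        ((Complex.continuous_ofReal.pow k).tendsto 0).isBigO_one ℝ
      simpa using h1.smul_isLittleO (hA x)
  refine ((((hsmul 0 e).add (hsmul 1 u)).add (hsmul 2 w)).add
    ((hpow 3 (by simp) (R u + Q w + c • u)).add (hpow 4 (by simp) (R w + c • w)))).congr_left
    fun θ => ?_
  have hPu : P u = u - Q e := eq_sub_of_add_eq hu
  have hPw : P w = w - c • e - R e - Q u := by rw [← hw]; abel
  simp only [map_add, map_smul, he, hPu, hPw]
  module

end QuasiEigenvector

section TwistedMatrix

variable {T : Type*} [Fintype T]

lemma isLittleO_mulVec_sub {A : ℝ → Matrix T T ℂ} {P Q R : Matrix T T ℂ}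
    (hA : ∀ a b, (fun θ : ℝ => A θ a b - (P a b + θ * Q a b + θ ^ 2 * R a b))
      =o[𝓝 0] fun θ : ℝ => θ ^ 2) (x : T → ℂ) :
    (fun θ : ℝ => A θ *ᵥ x - (P *ᵥ x + (θ : ℂ) • (Q *ᵥ x) + (θ : ℂ) ^ 2 • (R *ᵥ x)))
      =o[𝓝 0] fun θ : ℝ => θ ^ 2 := by
  refine isLittleO_pi.2 fun a => ?_
  have hsum : (fun θ : ℝ => ∑ b, (A θ a b - (P a b + θ * Q a b + θ ^ 2 * R a b)) * x b)
      =o[𝓝 0] fun θ : ℝ => θ ^ 2 :=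
    IsLittleO.fun_sum fun b _ => by
      simpa using (hA a b).mul_isBigO (isBigO_const_const (x b) (one_ne_zero' ℝ) _)
  refine hsum.congr_left fun θ => ?_
  simp only [Matrix.mulVec, dotProduct, Pi.add_apply, Pi.sub_apply, Pi.smul_apply, smul_eq_mul,
    Finset.mul_sum, ← Finset.sum_add_distrib, ← Finset.sum_sub_distrib]
  exact Finset.sum_congr rfl fun b _ => by ring

variable [DecidableEq T]

lemma tendsto_pow_mulVec {A : ℝ → Matrix T T ℂ} (hA1 : ∀ θ a, ∑ b, ‖A θ a b‖ ≤ 1)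
    {P Q R : Matrix T T ℂ} (hA : ∀ a b, (fun θ : ℝ => A θ a b -
      (P a b + θ * Q a b + θ ^ 2 * R a b)) =o[𝓝 0] fun θ : ℝ => θ ^ 2)
    {e u w : T → ℂ} {c : ℂ} (he : P *ᵥ e = e) (hu : P *ᵥ u + Q *ᵥ e = u)
    (hw : P *ᵥ w + Q *ᵥ u + R *ᵥ e = w - c • e) (s : ℝ) :
    Tendsto (fun n : ℕ => A (s / √n) ^ n *ᵥ e) atTop (𝓝 (Complex.exp (-(c * s ^ 2)) • e)) := by
  have hv : Tendsto (fun θ : ℝ => e + (θ : ℂ) • u + (θ : ℂ) ^ 2 • w) (𝓝 0) (𝓝 e) :=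
    Continuous.tendsto' (by fun_prop) _ _ (by simp)
  have hlittle : (fun θ : ℝ => Matrix.toLin' (A θ) (e + (θ : ℂ) • u + (θ : ℂ) ^ 2 • w)
      - (1 - c * θ ^ 2) • (e + (θ : ℂ) • u + (θ : ℂ) ^ 2 • w)) =o[𝓝 0] fun θ : ℝ => θ ^ 2 :=
    isLittleO_quasiEigenvector (P := Matrix.toLin' P) (Q := Matrix.toLin' Q)
      (R := Matrix.toLin' R) (isLittleO_mulVec_sub hA) he hu hw
  have hlim := tendsto_pow_apply_of_quasiEigenvector (A := fun θ => Matrix.toLin' (A θ))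
    (fun θ x => by simpa using norm_mulVec_le zero_le_one (hA1 θ) x) hv hlittle s
  simpa [← Matrix.toLin'_pow] using hlim

/-- The limiting variance `π R 1 + 2 π Q (∑ₙ Pⁿ) Q 1` of an additive functional of the Markov chain
with transition matrix `P` and stationary distribution `π`; the entries of `Q` and `R` are the first
and second moments of the centred increments, restricted to the transitions `a → b`. -/
def limitVariance (P Q R : Matrix T T ℝ) (π : T → ℝ) : ℝ :=
  π ⬝ᵥ (R *ᵥ 1) + 2 * π ⬝ᵥ (Q *ᵥ potential P (Q *ᵥ 1))

lemma exists_poisson_solutions {P : Matrix T T ℝ} {π : T → ℝ} (hP : P ∈ Matrix.rowStochastic ℝ T)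
    (hπ : IsStationaryDist P π) (hPπ : SatisfiesDoeblin P π) {Q : Matrix T T ℝ}
    (hQ : π ⬝ᵥ (Q *ᵥ 1) = 0) (R : Matrix T T ℝ) :
    ∃ u w : T → ℝ, P *ᵥ u + Q *ᵥ 1 = u ∧
      P *ᵥ w + (limitVariance P Q R π / 2) • 1 = w + Q *ᵥ u + (1 / 2 : ℝ) • (R *ᵥ 1) := by
  let u := potential P (Q *ᵥ 1)
  let g : T → ℝ := (limitVariance P Q R π / 2) • 1 - (1 / 2 : ℝ) • (R *ᵥ 1) - Q *ᵥ u
  have hg : π ⬝ᵥ g = 0 := by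
    have h1 : π ⬝ᵥ 1 = 1 := by simpa [dotProduct] using hπ.2.1
    simp only [g, u, limitVariance, dotProduct_sub, dotProduct_smul, h1, smul_eq_mul]
    ring
  have hw := mulVec_potential_add (summable_pow_mulVec hP hπ hPπ hg)
  refine ⟨u, potential P g, mulVec_potential_add (summable_pow_mulVec hP hπ hPπ hQ), ?_⟩
  nth_rw 2 [← hw]
  simp only [g]
  abel

theorem tendsto_twisted_pow_mulVec_one {P : Matrix T T ℝ} {π : T → ℝ}
    (hP : P ∈ Matrix.rowStochastic ℝ T) (hπ : IsStationaryDist P π) (hPπ : SatisfiesDoeblin P π)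
    {Q : Matrix T T ℝ} (hQ : π ⬝ᵥ (Q *ᵥ 1) = 0) {R : Matrix T T ℝ} {A : ℝ → Matrix T T ℂ}
    (hA1 : ∀ θ a, ∑ b, ‖A θ a b‖ ≤ 1)
    (hA : ∀ a b, (fun θ : ℝ => A θ a b - (P a b + θ * (Complex.I * Q a b)
      + θ ^ 2 * (-R a b / 2))) =o[𝓝 0] fun θ : ℝ => θ ^ 2) (s : ℝ) :
    Tendsto (fun n : ℕ => A (s / √n) ^ n *ᵥ 1) atTop
      (𝓝 (Complex.exp (-(limitVariance P Q R π / 2 * s ^ 2)) • 1)) := by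
  obtain ⟨u, w, hu, hw⟩ := exists_poisson_solutions hP hπ hPπ hQ R
  let ι : (T → ℝ) → T → ℂ := fun x a => x a
  have hι : ∀ (M : Matrix T T ℝ) x a, (M.map (↑) *ᵥ ι x) a = ((M *ᵥ x) a : ℂ) := fun M x a =>
    (RingHom.map_mulVec Complex.ofRealHom M x a).symm
  have hι1 : (1 : T → ℂ) = ι 1 := by ext; simp [ι]
  refine tendsto_pow_mulVec hA1 (P := P.map (↑)) (Q := Complex.I • Q.map (↑))
    (R := -(1 / 2 : ℂ) • R.map (↑)) (u := Complex.I • ι u) (w := ι w) ?_ ?_ ?_ ?_ s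
  · simpa [neg_div, div_eq_inv_mul] using hA
  · ext a
    rw [hι1, hι, congrFun (Matrix.one_vecMul_of_mem_rowStochastic hP) a]
  · ext a
    have hua : ((P *ᵥ u) a + (Q *ᵥ 1) a : ℂ) = u a := by exact_mod_cast congrFun hu a
    rw [hι1]
    simp only [Matrix.mulVec_smul, Matrix.smul_mulVec, Pi.add_apply, Pi.smul_apply, hι, smul_eq_mul,
      ← mul_add, hua, ι]
  · ext a
    have hwa : ((P *ᵥ w) a + limitVariance P Q R π / 2 : ℂ) =
        w a + (Q *ᵥ u) a + (1 / 2 : ℝ) * (R *ᵥ 1) a := by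
      exact_mod_cast (by simpa using congrFun hw a)
    rw [hι1]
    simp only [Matrix.mulVec_smul, Matrix.smul_mulVec, Pi.add_apply, Pi.sub_apply, Pi.smul_apply,
      hι, smul_eq_mul]
    simp only [ι, Pi.one_apply, Complex.ofReal_one]
    push_cast at hwa
    linear_combination hwa + (Q *ᵥ u) a * Complex.I_mul_I

end TwistedMatrix

section MarkovProperty

variable {S : Type*} [Countable S] [MeasurableSpace S] [MeasurableSingletonClass S]
  {κ : Kernel S S} [IsMarkovKernel κ] {μ : Measure (ℕ → S)} [SFinite μ]

lemma map_history_prodMk_eq_compProd {n : ℕ}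
    (hμ : ∀ x : ℕ → S, μ {ω | ∀ i ≤ n + 1, ω i = x i} =
      μ {ω | ∀ i ≤ n, ω i = x i} * κ (x n) {x (n + 1)}) :
    μ.map (fun ω => (fun i : Fin (n + 1) => ω i, ω (n + 1))) =
      μ.map (fun ω (i : Fin (n + 1)) => ω i) ⊗ₘ
        κ.comap (fun h : Fin (n + 1) → S => h (Fin.last n)) (measurable_pi_apply _) := by
  refine Measure.ext_of_singleton fun ⟨h, y⟩ => ?_
  let x : ℕ → S := fun i => if hi : i < n + 1 then h ⟨i, hi⟩ else y
  have hx : ∀ i : Fin (n + 1), x i = h i := fun i => dif_pos i.2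
  have hxy : x (n + 1) = y := dif_neg (lt_irrefl _)
  have hhist : ∀ ω : ℕ → S, (fun i : Fin (n + 1) => ω i) = h ↔ ∀ i ≤ n, ω i = x i := fun ω => by
    simp only [funext_iff, Fin.forall_iff, ← hx, Nat.lt_succ_iff]
  have hcyl : ∀ ω : ℕ → S, (∀ i ≤ n + 1, ω i = x i) ↔ (∀ i ≤ n, ω i = x i) ∧ ω (n + 1) = y :=
    fun ω => by simp only [Nat.le_succ_iff, or_imp, forall_and, forall_eq, hxy]
  have hpre : (fun ω : ℕ → S => fun i : Fin (n + 1) => ω i) ⁻¹' {h} = {ω | ∀ i ≤ n, ω i = x i} :=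
    Set.ext hhist
  have hpre_succ : (fun ω : ℕ → S => (fun i : Fin (n + 1) => ω i, ω (n + 1))) ⁻¹' {(h, y)} =
      {ω | ∀ i ≤ n + 1, ω i = x i} :=
    Set.ext fun ω => by simp [hcyl, ← hhist]
  rw [Measure.map_apply (by fun_prop) (measurableSet_singleton _), hpre_succ, hμ,
    ← Set.singleton_prod_singleton,
    Measure.compProd_apply_prod (measurableSet_singleton h) (measurableSet_singleton y),
    lintegral_singleton, Measure.map_apply (by fun_prop) (measurableSet_singleton h), hpre,
    Kernel.comap_apply, ← hx, hxy, mul_comm, Fin.val_last]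

theorem integral_succ_eq_integral_kernel {E : Type*} [NormedAddCommGroup E] [NormedSpace ℝ E]
    {n : ℕ} (hμ : ∀ x : ℕ → S, μ {ω | ∀ i ≤ n + 1, ω i = x i} =
      μ {ω | ∀ i ≤ n, ω i = x i} * κ (x n) {x (n + 1)})
    {F : S → E} (hF : Integrable (fun ω => F (ω (n + 1))) μ) :
    ∫ ω, F (ω (n + 1)) ∂μ = ∫ ω, ∫ y, F y ∂(κ (ω n)) ∂μ := by
  have hmap := map_history_prodMk_eq_compProd hμ
  have hm : Measurable fun ω : ℕ → S => (fun i : Fin (n + 1) => ω i, ω (n + 1)) := by fun_prop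
  calc ∫ ω, F (ω (n + 1)) ∂μ
      = ∫ q, F q.2 ∂μ.map (fun ω => (fun i : Fin (n + 1) => ω i, ω (n + 1))) :=
        (integral_map (f := fun q => F q.2) hm.aemeasurable AEStronglyMeasurable.of_discrete).symm
    _ = ∫ h, ∫ y, F y ∂κ (h (Fin.last n)) ∂μ.map (fun ω (i : Fin (n + 1)) => ω i) := by
        rw [hmap, Measure.integral_compProd]
        · rfl
        · rw [← hmap]
          exact (integrable_map_measure AEStronglyMeasurable.of_discrete hm.aemeasurable).2 hF
    _ = ∫ ω, ∫ y, F y ∂(κ (ω n)) ∂μ :=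
        integral_map (measurable_pi_lambda _ fun _ => measurable_pi_apply _).aemeasurable
          AEStronglyMeasurable.of_discrete

end MarkovProperty

section MarkedMatrix

variable {T Z 𝕜 : Type*} [DecidableEq T] [RCLike 𝕜] {q : T → Z → ℝ} {τ : T → Z → T}
  {φ ψ : Z → 𝕜}

/-- The matrix of the weights `φ` of the jumps `z`, summed over the jumps that lead from `a` to `b`,
for the chain which in state `a` chooses the jump `z` with probability `q a z` and then moves to
`τ a z`. The weight `1` gives the transition matrix. -/
def markedMatrix (q : T → Z → ℝ) (τ : T → Z → T) (φ : Z → 𝕜) : Matrix T T 𝕜 :=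
  Matrix.of fun a b => ∑' z, if τ a z = b then q a z • φ z else 0

lemma summable_ite_landing (hφ : ∀ a, Summable fun z => q a z • φ z) (a b : T) :
    Summable fun z => if τ a z = b then q a z • φ z else 0 := by
  classical
  exact ((hφ a).indicator {z | τ a z = b}).congr fun z => by simp [Set.indicator_apply]

lemma markedMatrix_sub (hφ : ∀ a, Summable fun z => q a z • φ z)
    (hψ : ∀ a, Summable fun z => q a z • ψ z) :
    markedMatrix q τ (fun z => φ z - ψ z) = markedMatrix q τ φ - markedMatrix q τ ψ := by
  ext a b
  simp only [markedMatrix, Matrix.of_apply, Matrix.sub_apply]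
  rw [← (summable_ite_landing hφ a b).tsum_sub (summable_ite_landing hψ a b)]
  exact tsum_congr fun z => by split_ifs <;> simp [smul_sub]

lemma markedMatrix_const_mul (c : 𝕜) :
    markedMatrix q τ (fun z => c * φ z) = c • markedMatrix q τ φ := by
  ext a b
  simp only [markedMatrix, Matrix.of_apply, Matrix.smul_apply, smul_eq_mul, ← tsum_mul_left]
  exact tsum_congr fun z => by split_ifs <;> simp

lemma markedMatrix_sum {ι : Type*} {s : Finset ι} {φ : ι → Z → 𝕜}
    (hφ : ∀ i ∈ s, ∀ a, Summable fun z => q a z • φ i z) :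
    markedMatrix q τ (fun z => ∑ i ∈ s, φ i z) = ∑ i ∈ s, markedMatrix q τ (φ i) := by
  ext a b
  simp only [markedMatrix, Matrix.of_apply, Matrix.sum_apply]
  rw [← Summable.tsum_finsetSum fun i hi => summable_ite_landing (hφ i hi) a b]
  exact tsum_congr fun z => by split_ifs <;> simp [Finset.smul_sum]

lemma norm_markedMatrix_le (h0 : ∀ a z, 0 ≤ q a z) (hq : ∀ a, Summable (q a))
    (hφ : ∀ z, ‖φ z‖ ≤ 1) (a b : T) :
    ‖markedMatrix q τ φ a b‖ ≤ markedMatrix q τ (fun _ => (1 : ℝ)) a b := by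
  have hq1 : ∀ a, Summable fun z => q a z • (1 : ℝ) := by simpa using hq
  refine tsum_of_norm_bounded (summable_ite_landing hq1 a b).hasSum fun z => ?_
  split_ifs
  · simpa [norm_smul, abs_of_nonneg (h0 a z)] using mul_le_mul_of_nonneg_left (hφ z) (h0 a z)
  · simp

lemma markedMatrix_apply_eq_zero (h0 : ∀ a z, 0 ≤ q a z) (hq : ∀ a, Summable (q a)) {a b : T}
    (hab : markedMatrix q τ (fun _ => (1 : ℝ)) a b = 0) (φ : Z → 𝕜) :
    markedMatrix q τ φ a b = 0 := by
  have hsum : Summable fun z => if τ a z = b then q a z • (1 : ℝ) else 0 :=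
    summable_ite_landing (by simpa using hq) a b
  have hzero : ∀ z, (if τ a z = b then q a z • (1 : ℝ) else 0) = 0 := congrFun <|
    (hasSum_zero_iff_of_nonneg fun z => by split_ifs <;> simp [h0]).1 (hsum.hasSum_iff.2 hab)
  refine (tsum_congr fun z => ?_).trans tsum_zero
  simpa [ite_eq_right_iff] using fun hz : τ a z = b => Or.inl (by simpa [hz] using hzero z)

variable [Fintype T]

lemma hasSum_markedMatrix_mulVec (hφ : ∀ a, Summable fun z => q a z • φ z) (v : T → 𝕜) (a : T) :
    HasSum (fun z => (q a z • φ z) * v (τ a z)) ((markedMatrix q τ φ *ᵥ v) a) := by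
  refine (hasSum_sum fun b _ => ((summable_ite_landing (τ := τ) hφ a b).hasSum.mul_right
    (v b))).congr_fun fun z => ?_
  simp

lemma markedMatrix_mulVec_one (hφ : ∀ a, Summable fun z => q a z • φ z) (a : T) :
    (markedMatrix q τ φ *ᵥ 1) a = ∑' z, q a z • φ z := by
  simpa using (hasSum_markedMatrix_mulVec (τ := τ) hφ 1 a).tsum_eq.symm

lemma markedMatrix_one_mem_rowStochastic (h0 : ∀ a z, 0 ≤ q a z) (hq : ∀ a, HasSum (q a) 1) :
    markedMatrix q τ (fun _ => (1 : ℝ)) ∈ Matrix.rowStochastic ℝ T := by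
  refine Matrix.mem_rowStochastic.2 ⟨fun a b => tsum_nonneg fun z => ?_, funext fun a => ?_⟩
  · split_ifs <;> simp [h0]
  · rw [markedMatrix_mulVec_one (by simpa using fun a => (hq a).summable)]
    simpa using (hq a).tsum_eq

lemma sum_norm_markedMatrix_le_one (h0 : ∀ a z, 0 ≤ q a z) (hq : ∀ a, HasSum (q a) 1)
    (hφ : ∀ z, ‖φ z‖ ≤ 1) (a : T) : ∑ b, ‖markedMatrix q τ φ a b‖ ≤ 1 :=
  (Finset.sum_le_sum fun b _ =>
    norm_markedMatrix_le h0 (fun a => (hq a).summable) hφ a b).trans_eq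
    (Matrix.sum_row_of_mem_rowStochastic (markedMatrix_one_mem_rowStochastic h0 hq) a)

end MarkedMatrix

section TaylorExpansion

variable {Z : Type*}

lemma isLittleO_tsum_mul_comp {r : ℝ → ℂ} {k : ℕ} {C : ℝ} (hr : r =o[𝓝 0] fun x => x ^ k)
    (hrC : ∀ x, ‖r x‖ ≤ C * |x| ^ k) {c y : Z → ℝ} (hc : Summable fun z => |c z| * |y z| ^ k) :
    (fun θ : ℝ => ∑' z, c z * r (θ * y z)) =o[𝓝 0] fun θ => θ ^ k := by
  have hbound : ∀ θ z, ‖c z * r (θ * y z)‖ ≤ C * (|c z| * |y z| ^ k) * |θ| ^ k := fun θ z => by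
    rw [norm_mul, Complex.norm_real, Real.norm_eq_abs]
    exact (mul_le_mul_of_nonneg_left (hrC _) (abs_nonneg _)).trans_eq (by
      rw [abs_mul, mul_pow]; ring)
  have hC : 0 ≤ C := by simpa using (norm_nonneg _).trans (hrC 1)
  rw [← Complex.isLittleO_ofReal_right]
  refine isLittleO_of_tendsto (fun θ hθ => ?_) ?_
  · have hθ' : |θ| ^ k = 0 := by rw [← abs_pow, abs_eq_zero]; exact_mod_cast hθ
    have hzero : ∀ z, c z * r (θ * y z) = 0 := fun z => norm_le_zero_iff.1 (by
      simpa [hθ'] using hbound θ z)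
    simp [hzero]
  · simp only [← tsum_div_const]
    rw [← tsum_zero (α := ℂ) (β := Z)]
    refine tendsto_tsum_of_dominated_convergence (hc.mul_left C) (fun z => ?_)
      (.of_forall fun θ z => ?_)
    · have hlim : Tendsto (fun θ => θ * y z) (𝓝 0) (𝓝 0) :=
        Continuous.tendsto' (by fun_prop) _ _ (by simp)
      have hz : (fun θ : ℝ => c z * r (θ * y z)) =o[𝓝 0] fun θ : ℝ => ((θ ^ k : ℝ) : ℂ) := by
        refine .const_mul_left (Complex.isLittleO_ofReal_right.2
          ((hr.comp_tendsto hlim).trans_isBigO ?_)) _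
        exact .of_bound (|y z| ^ k) (.of_forall fun θ => by simp [mul_pow, mul_comm])
      exact hz.tendsto_div_nhds_zero
    · rw [norm_div, Complex.norm_real, norm_pow, Real.norm_eq_abs]
      exact div_le_of_le_mul₀ (by positivity) (by positivity) (hbound θ z)

lemma norm_cexp_I_mul_sub_le (x : ℝ) :
    ‖Complex.exp (Complex.I * x) - (1 + Complex.I * x + (Complex.I * x) ^ 2 / 2)‖ ≤
      4 * |x| ^ 2 := by
  have hI : ‖Complex.I * (x : ℂ)‖ = |x| := by simp
  have hsq : ‖(Complex.I * (x : ℂ)) ^ 2 / 2‖ = |x| ^ 2 / 2 := by simp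
  rw [← sub_sub, ← sub_sub]
  rcases le_total |x| 1 with h | h
  · linarith [norm_sub_le (Complex.exp (Complex.I * x) - 1 - Complex.I * x)
        ((Complex.I * x) ^ 2 / 2), sq_nonneg |x|,
      hI ▸ Complex.norm_exp_sub_one_sub_id_le (x := Complex.I * x) (hI.trans_le h)]
  · have h1 := norm_sub_le (Complex.exp (Complex.I * x) - 1 - Complex.I * x)
      ((Complex.I * x) ^ 2 / 2)
    have h2 := norm_sub_le (Complex.exp (Complex.I * x) - 1) (Complex.I * x)
    have h3 := Real.norm_exp_I_mul_ofReal_sub_one_le (x := x)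
    rw [Real.norm_eq_abs] at h3
    nlinarith

lemma isLittleO_cexp_I_mul_sub :
    (fun x : ℝ => Complex.exp (Complex.I * x) - (1 + Complex.I * x + (Complex.I * x) ^ 2 / 2))
      =o[𝓝 0] fun x => x ^ 2 := by
  have hlim : Tendsto (fun x : ℝ => Complex.I * (x : ℂ)) (𝓝 0) (𝓝 0) :=
    Continuous.tendsto' (by fun_prop) _ _ (by simp)
  have := (Complex.exp_sub_sum_range_succ_isLittleO_pow 2).comp_tendsto hlim
  rw [← isLittleO_norm_right] at this ⊢
  simpa [Function.comp_def, Finset.sum_range_succ] using this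

theorem isLittleO_tsum_mul_cexp_sub {c y : Z → ℝ} (hc : Summable c)
    (hc1 : Summable fun z => c z * y z) (hc2 : Summable fun z => c z * y z ^ 2) :
    (fun θ : ℝ => ∑' z, c z * Complex.exp (Complex.I * (θ * y z))
      - (((∑' z, c z : ℝ) : ℂ) + θ * (Complex.I * (∑' z, c z * y z : ℝ))
        + θ ^ 2 * (-(∑' z, c z * y z ^ 2 : ℝ) / 2))) =o[𝓝 0] fun θ : ℝ => θ ^ 2 := by
  have hrem := isLittleO_tsum_mul_comp isLittleO_cexp_I_mul_sub norm_cexp_I_mul_sub_le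
    (c := c) (y := y) (by simpa [abs_mul] using hc2.abs)
  refine hrem.congr_left fun θ => ?_
  have hexp : Summable fun z => c z * Complex.exp (Complex.I * (θ * y z)) :=
    .of_norm <| by
      simpa [← Complex.ofReal_mul] using hc.abs
  have htaylor := ((Complex.hasSum_ofReal.2 hc.hasSum).add
    ((Complex.hasSum_ofReal.2 hc1.hasSum).mul_left (θ * Complex.I : ℂ))).add
    ((Complex.hasSum_ofReal.2 hc2.hasSum).mul_left (-θ ^ 2 / 2 : ℂ))
  refine HasSum.tsum_eq ?_
  convert! hexp.hasSum.sub htaylor using 1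
  · ext z
    push_cast
    linear_combination (-c z * θ ^ 2 * y z ^ 2 / 2 : ℂ) * Complex.I_sq
  · ring

end TaylorExpansion

section MarkedMatrixExpansion

variable {T Z : Type*} [DecidableEq T] {q : T → Z → ℝ} {τ : T → Z → T} {y : Z → ℝ}

theorem isLittleO_markedMatrix_cexp_sub (hq : ∀ a, Summable (q a))
    (hq1 : ∀ a, Summable fun z => q a z * y z) (hq2 : ∀ a, Summable fun z => q a z * y z ^ 2)
    (a b : T) :
    (fun θ : ℝ => markedMatrix q τ (fun z => Complex.exp (Complex.I * (θ * y z))) a b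
      - (markedMatrix q τ (fun _ => (1 : ℝ)) a b
        + θ * (Complex.I * markedMatrix q τ y a b)
        + θ ^ 2 * (-markedMatrix q τ (fun z => y z ^ 2) a b / 2))) =o[𝓝 0] fun θ : ℝ => θ ^ 2 := by
  let c : Z → ℝ := fun z => if τ a z = b then q a z else 0
  have hmarked : ∀ φ : Z → ℝ, markedMatrix q τ φ a b = ∑' z, c z * φ z := fun φ => by
    simp [markedMatrix, c]
  have hmarkedC : ∀ φ : Z → ℂ, markedMatrix q τ φ a b = ∑' z, c z * φ z := fun φ => by
    refine tsum_congr fun z => ?_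
    split_ifs <;> simp [c, *]
  have hsum : ∀ φ : Z → ℝ, (∀ a, Summable fun z => q a z * φ z) → Summable fun z => c z * φ z :=
    fun φ hφ => by simpa [c] using summable_ite_landing (τ := τ) hφ a b
  simp only [hmarked, hmarkedC, mul_one]
  exact isLittleO_tsum_mul_cexp_sub
    (by simpa using hsum (fun _ => 1) (by simpa using hq)) (hsum y hq1) (hsum _ hq2)

end MarkedMatrixExpansion

section RandomWalk

variable {d : ℕ} {p : (Fin d → ℤ) → (Fin d → ℤ) → ℝ} {x₀ : Fin d → ℤ}
  {μ : Measure (ℕ → (Fin d → ℤ))}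

/-- The law of the next site of the walk in the environment `p` that stands at `x`. -/
def stepPMF (p : (Fin d → ℤ) → (Fin d → ℤ) → ℝ) (h0 : ∀ x z, 0 ≤ p x z)
    (hp : ∀ x, HasSum (p x) 1) (x : Fin d → ℤ) : PMF (Fin d → ℤ) :=
  ⟨fun y => ENNReal.ofReal (p x (y - x)), by
    have h1 : HasSum (fun y => p x (y - x)) 1 := (Equiv.subRight x).hasSum_iff.2 (hp x)
    rw [ENNReal.summable.hasSum_iff, ← ENNReal.ofReal_tsum_of_nonneg (fun y => h0 _ _) h1.summable,
      h1.tsum_eq, ENNReal.ofReal_one]⟩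

lemma stepPMF_apply (h0 : ∀ x z, 0 ≤ p x z) (hp : ∀ x, HasSum (p x) 1) (x y : Fin d → ℤ) :
    stepPMF p h0 hp x y = ENNReal.ofReal (p x (y - x)) := rfl

/-- The transition kernel on `ℤ^d` of the walk in the environment `p`. -/
def stepKernel (p : (Fin d → ℤ) → (Fin d → ℤ) → ℝ) (h0 : ∀ x z, 0 ≤ p x z)
    (hp : ∀ x, HasSum (p x) 1) : Kernel (Fin d → ℤ) (Fin d → ℤ) :=
  Kernel.ofFunOfCountable fun x => (stepPMF p h0 hp x).toMeasure

instance (h0 : ∀ x z, 0 ≤ p x z) (hp : ∀ x, HasSum (p x) 1) :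
    IsMarkovKernel (stepKernel p h0 hp) :=
  ⟨fun x => PMF.toMeasure.isProbabilityMeasure (stepPMF p h0 hp x)⟩

lemma integral_stepKernel (h0 : ∀ x z, 0 ≤ p x z) (hp : ∀ x, HasSum (p x) 1) {E : Type*}
    [NormedAddCommGroup E] [NormedSpace ℝ E] [CompleteSpace E] {F : (Fin d → ℤ) → E}
    {x : Fin d → ℤ} (hF : Integrable F (stepKernel p h0 hp x)) :
    ∫ y, F y ∂(stepKernel p h0 hp x) = ∑' z, p x z • F (x + z) := by
  rw [← (Equiv.subRight x).tsum_eq]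
  refine (PMF.integral_eq_tsum _ _ hF).trans (tsum_congr fun y => ?_)
  simp [stepPMF_apply, h0]

namespace IsRWPELaw

lemma ae_apply_zero_eq (hμ : IsRWPELaw p x₀ μ) : ∀ᵐ ω ∂μ, ω 0 = x₀ := by
  have := hμ.1
  have hone : μ {ω | ω 0 = x₀} = 1 := by simpa using hμ.2 0 fun _ => x₀
  exact (mem_ae_iff_prob_eq_one
    (measurableSet_eq_fun (measurable_pi_apply 0) measurable_const)).2 hone

lemma measure_cylinder_succ (hμ : IsRWPELaw p x₀ μ) (h0 : ∀ x z, 0 ≤ p x z)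
    (hp : ∀ x, HasSum (p x) 1) (n : ℕ) (x : ℕ → Fin d → ℤ) :
    μ {ω | ∀ i ≤ n + 1, ω i = x i} =
      μ {ω | ∀ i ≤ n, ω i = x i} * stepKernel p h0 hp (x n) {x (n + 1)} := by
  have hstep : stepKernel p h0 hp (x n) {x (n + 1)} =
      ENNReal.ofReal (p (x n) (x (n + 1) - x n)) :=
    PMF.toMeasure_apply_singleton _ _ (measurableSet_singleton _)
  rw [hμ.2, hμ.2, hstep, Finset.prod_range_succ, ← mul_assoc, ENNReal.ofReal_mul]
  exact mul_nonneg (by split_ifs <;> simp) (Finset.prod_nonneg fun _ _ => h0 _ _)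

theorem integral_succ (hμ : IsRWPELaw p x₀ μ) (h0 : ∀ x z, 0 ≤ p x z)
    (hp : ∀ x, HasSum (p x) 1) {E : Type*} [NormedAddCommGroup E] [NormedSpace ℝ E]
    [CompleteSpace E] {F : (Fin d → ℤ) → E} {C : ℝ} (hF : ∀ x, ‖F x‖ ≤ C) (n : ℕ) :
    ∫ ω, F (ω (n + 1)) ∂μ = ∫ ω, ∑' z, p (ω n) z • F (ω n + z) ∂μ := by
  have := hμ.1
  have hint : Integrable (fun ω : ℕ → Fin d → ℤ => F (ω (n + 1))) μ :=
    .of_bound (AEStronglyMeasurable.of_discrete.comp_measurable (measurable_pi_apply _)) C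
      (.of_forall fun ω => hF _)
  rw [integral_succ_eq_integral_kernel (hμ.measure_cylinder_succ h0 hp n) hint]
  refine integral_congr_ae (.of_forall fun ω => integral_stepKernel h0 hp ?_)
  exact .of_bound .of_discrete C (.of_forall hF)

end IsRWPELaw

end RandomWalk

section PeriodicEnvironment

variable {d : ℕ} {Md : Fin d → ℕ} {p : (Fin d → ℤ) → (Fin d → ℤ) → ℝ} {𝕜 : Type*} [RCLike 𝕜]
  {φ : (Fin d → ℤ) → 𝕜}

lemma projT_add (x y : Fin d → ℤ) : projT Md (x + y) = projT Md x + projT Md y := by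
  ext i
  simp [projT]

lemma IsPeriodicEnv.summable_smul (henv : IsPeriodicEnv Md p) (hφ : ∀ z, ‖φ z‖ ≤ 1)
    (x : Fin d → ℤ) : Summable fun z => p x z • φ z :=
  .of_norm_bounded (henv.2.1 x).summable fun z => by
    rw [norm_smul, Real.norm_of_nonneg (henv.1 x z)]
    exact mul_le_of_le_one_right (henv.1 x z) (hφ z)

variable [∀ i, NeZero (Md i)]

lemma IsPeriodicEnv.apply_repT_projT (henv : IsPeriodicEnv Md p) (x : Fin d → ℤ) :
    p (repT Md (projT Md x)) = p x := by
  have hper : ∀ i, Function.Periodic p (Pi.single i (Md i : ℤ)) := fun i x =>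
    funext fun y => henv.2.2 x y i
  have hsum : Function.Periodic p (∑ i, (x i / Md i) • Pi.single i (Md i : ℤ)) :=
    Finset.sum_induction _ (Function.Periodic p) (fun _ _ => .add_period)
      (by simp [Function.Periodic]) fun i _ => (hper i).zsmul _
  have hx : repT Md (projT Md x) + ∑ i, (x i / Md i) • Pi.single i (Md i : ℤ) = x := by
    ext i
    simp [repT, projT, Pi.single_apply, ZMod.coe_intCast, Int.emod_add_ediv_mul]
  rw [← hsum, hx]

/-- The transition matrix of the induced chain on the torus with every jump `z` weighted
by `φ z`. -/
abbrev jumpMatrix (Md : Fin d → ℕ) [∀ i, NeZero (Md i)] (p : (Fin d → ℤ) → (Fin d → ℤ) → ℝ)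
    (φ : (Fin d → ℤ) → 𝕜) : Matrix (Torus d Md) (Torus d Md) 𝕜 :=
  markedMatrix (fun a => p (repT Md a)) (fun a z => a + projT Md z) φ

lemma jumpMatrix_one : jumpMatrix Md p (fun _ => (1 : ℝ)) = indMatrix Md p := by
  ext a b
  simp [markedMatrix, indMatrix]

lemma IsPeriodicEnv.indMatrix_mem_rowStochastic (henv : IsPeriodicEnv Md p) :
    indMatrix Md p ∈ Matrix.rowStochastic ℝ (Torus d Md) :=
  jumpMatrix_one (Md := Md) (p := p) ▸
    markedMatrix_one_mem_rowStochastic (fun _ => henv.1 _) fun _ => henv.2.1 _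

lemma IsPeriodicEnv.hasSum_jumpMatrix_mulVec (henv : IsPeriodicEnv Md p) (hφ : ∀ z, ‖φ z‖ ≤ 1)
    (v : Torus d Md → 𝕜) (x : Fin d → ℤ) :
    HasSum (fun z => (p x z • φ z) * v (projT Md (x + z)))
      ((jumpMatrix Md p φ *ᵥ v) (projT Md x)) := by
  have := hasSum_markedMatrix_mulVec (τ := fun a z => a + projT Md z)
    (fun a => henv.summable_smul hφ (repT Md a)) v (projT Md x)
  simpa only [henv.apply_repT_projT, ← projT_add] using this

theorem IsRWPELaw.integral_mul_eq_jumpMatrix_pow_mulVec {x₀ : Fin d → ℤ}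
    {μ : Measure (ℕ → (Fin d → ℤ))} (hμ : IsRWPELaw p x₀ μ) (henv : IsPeriodicEnv Md p)
    {f : ℕ → (Fin d → ℤ) → 𝕜} (hf : ∀ n x z, f (n + 1) (x + z) = f n x * φ z)
    (hf1 : ∀ n x, ‖f n x‖ ≤ 1) (hφ : ∀ z, ‖φ z‖ ≤ 1) (n : ℕ) (v : Torus d Md → 𝕜) :
    ∫ ω, f n (ω n) * v (projT Md (ω n)) ∂μ =
      f 0 x₀ * (jumpMatrix Md p φ ^ n *ᵥ v) (projT Md x₀) := by
  have := hμ.1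
  induction n generalizing v with
  | zero =>
    rw [integral_congr_ae (g := fun _ => f 0 x₀ * v (projT Md x₀))
      (hμ.ae_apply_zero_eq.mono fun ω hω => by simp only [hω])]
    simp
  | succ n ih =>
    have hbound : ∀ x, ‖f (n + 1) x * v (projT Md x)‖ ≤ ‖v‖ := fun x =>
      (norm_mul_le _ _).trans
        ((mul_le_of_le_one_left (norm_nonneg _) (hf1 _ _)).trans (norm_le_pi_norm _ _))
    have hstep : ∀ x, ∑' z, p x z • (f (n + 1) (x + z) * v (projT Md (x + z))) =
        f n x * (jumpMatrix Md p φ *ᵥ v) (projT Md x) := fun x => by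
      rw [← ((henv.hasSum_jumpMatrix_mulVec hφ v x).mul_left (f n x)).tsum_eq]
      simp only [hf, mul_assoc, mul_smul_comm, smul_mul_assoc]
    rw [hμ.integral_succ henv.1 henv.2.1 (F := fun x => f (n + 1) x * v (projT Md x)) hbound n]
    simp only [hstep, ih, pow_succ, Matrix.mulVec_mulVec]

end PeriodicEnvironment

section CharacteristicFunctions

lemma nonneg_of_tendsto_charFun {ρ : ℕ → Measure ℝ} [∀ n, IsProbabilityMeasure (ρ n)] {v : ℝ}
    (hρ : Tendsto (fun n => charFun (ρ n) 1) atTop (𝓝 (Complex.exp (-(v / 2 : ℝ))))) : 0 ≤ v := by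
  have hle : ‖Complex.exp (-(v / 2 : ℝ))‖ ≤ 1 :=
    le_of_tendsto' hρ.norm fun n => norm_charFun_le_one _
  rw [← Complex.ofReal_neg, Complex.norm_exp_ofReal, Real.exp_le_one_iff] at hle
  linarith

theorem tendsto_integral_gaussianReal_of_tendsto_charFun {Ω : Type*} [MeasurableSpace Ω]
    {μ : Measure Ω} [IsProbabilityMeasure μ] {X : ℕ → Ω → ℝ} (hX : ∀ n, AEMeasurable (X n) μ)
    {v : ℝ} (hv : ∀ s, Tendsto (fun n => charFun (μ.map (X n)) s) atTop
      (𝓝 (Complex.exp (-(v / 2 * s ^ 2 : ℝ))))) (f : BoundedContinuousFunction ℝ ℝ) :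
    Tendsto (fun n => ∫ ω, f (X n ω) ∂μ) atTop (𝓝 (∫ x, f x ∂gaussianReal 0 v.toNNReal)) := by
  have hprob : ∀ n, IsProbabilityMeasure (μ.map (X n)) := fun n =>
    Measure.isProbabilityMeasure_map (hX n)
  have hv0 : 0 ≤ v := nonneg_of_tendsto_charFun (by simpa using hv 1)
  let ρ : ℕ → ProbabilityMeasure ℝ := fun n => ⟨μ.map (X n), hprob n⟩
  let γ : ProbabilityMeasure ℝ := ⟨gaussianReal 0 v.toNNReal, inferInstance⟩
  have hlim : Tendsto ρ atTop (𝓝 γ) := by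
    refine ProbabilityMeasure.tendsto_iff_tendsto_charFun.2 fun s => ?_
    convert! hv s using 2
    simp only [γ, ProbabilityMeasure.coe_mk, charFun_gaussianReal, Real.coe_toNNReal _ hv0]
    congr 1
    push_cast
    ring
  refine (ProbabilityMeasure.tendsto_iff_forall_integral_tendsto.1 hlim f).congr fun n => ?_
  exact integral_map (hX n) f.continuous.measurable.aestronglyMeasurable

end CharacteristicFunctions

section AdditiveFunctional

variable {d : ℕ} {Md : Fin d → ℕ} [∀ i, NeZero (Md i)] {p : (Fin d → ℤ) → (Fin d → ℤ) → ℝ}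
  {x₀ : Fin d → ℤ} {μ : Measure (ℕ → (Fin d → ℤ))} {Y : ℕ → (Fin d → ℤ) → ℝ}
  {y : (Fin d → ℤ) → ℝ}

lemma IsRWPELaw.integral_cexp_eq_jumpMatrix_pow_mulVec (hμ : IsRWPELaw p x₀ μ)
    (henv : IsPeriodicEnv Md p) (hY : ∀ n x z, Y (n + 1) (x + z) = Y n x + y z) (θ : ℝ) (n : ℕ) :
    ∫ ω, Complex.exp (Complex.I * (θ * Y n (ω n))) ∂μ = Complex.exp (Complex.I * (θ * Y 0 x₀)) *
      (jumpMatrix Md p (fun z => Complex.exp (Complex.I * (θ * y z))) ^ n *ᵥ 1) (projT Md x₀) := by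
  have hnorm : ∀ r : ℝ, ‖Complex.exp (Complex.I * (θ * r))‖ ≤ 1 := fun r => by
    rw [← Complex.ofReal_mul, Complex.norm_exp_I_mul_ofReal]
  rw [← hμ.integral_mul_eq_jumpMatrix_pow_mulVec henv
    (f := fun n x => Complex.exp (Complex.I * (θ * Y n x))) _ (fun _ _ => hnorm _) fun _ => hnorm _]
  · simp
  · intro n x z
    rw [hY, ← Complex.exp_add]
    push_cast
    ring_nf

variable {π : Torus d Md → ℝ}

lemma tendsto_jumpMatrix_pow_mulVec_one (henv : IsPeriodicEnv Md p)
    (hπ : IsStationaryDist (indMatrix Md p) π) (hPπ : SatisfiesDoeblin (indMatrix Md p) π)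
    (hy1 : ∀ a, Summable fun z => p (repT Md a) z * y z)
    (hy2 : ∀ a, Summable fun z => p (repT Md a) z * y z ^ 2)
    (hy : π ⬝ᵥ (jumpMatrix Md p y *ᵥ 1) = 0) (s : ℝ) :
    Tendsto (fun n : ℕ =>
        jumpMatrix Md p (fun z => Complex.exp (Complex.I * ((s / √n : ℝ) * y z))) ^ n *ᵥ 1) atTop
      (𝓝 (Complex.exp (-(limitVariance (indMatrix Md p) (jumpMatrix Md p y)
        (jumpMatrix Md p fun z => y z ^ 2) π / 2 * s ^ 2)) • 1)) := by
  refine tendsto_twisted_pow_mulVec_one henv.indMatrix_mem_rowStochastic hπ hPπ hy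
    (A := fun θ => jumpMatrix Md p fun z => Complex.exp (Complex.I * (θ * y z)))
    (fun θ => ?_) (fun a b => ?_) s
  · refine sum_norm_markedMatrix_le_one (fun _ => henv.1 _) (fun _ => henv.2.1 _) fun z => ?_
    rw [← Complex.ofReal_mul, Complex.norm_exp_I_mul_ofReal]
  · rw [← jumpMatrix_one]
    exact isLittleO_markedMatrix_cexp_sub (fun _ => (henv.2.1 _).summable) hy1 hy2 a b

theorem IsRWPELaw.tendsto_integral_additive_functional (hμ : IsRWPELaw p x₀ μ)
    (henv : IsPeriodicEnv Md p) (hπ : IsStationaryDist (indMatrix Md p) π)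
    (hPπ : SatisfiesDoeblin (indMatrix Md p) π)
    (hY : ∀ n x z, Y (n + 1) (x + z) = Y n x + y z)
    (hy1 : ∀ a, Summable fun z => p (repT Md a) z * y z)
    (hy2 : ∀ a, Summable fun z => p (repT Md a) z * y z ^ 2)
    (hy : π ⬝ᵥ (jumpMatrix Md p y *ᵥ 1) = 0) (f : BoundedContinuousFunction ℝ ℝ) :
    Tendsto (fun n : ℕ => ∫ ω, f (Y n (ω n) / √n) ∂μ) atTop
      (𝓝 (∫ x, f x ∂gaussianReal 0 (limitVariance (indMatrix Md p) (jumpMatrix Md p y)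
        (jumpMatrix Md p fun z => y z ^ 2) π).toNNReal)) := by
  have := hμ.1
  have hmeas : ∀ n : ℕ, Measurable fun ω : ℕ → Fin d → ℤ => Y n (ω n) / √n := fun n =>
    (Measurable.of_discrete (f := fun x => Y n x / √n)).comp (measurable_pi_apply n)
  refine tendsto_integral_gaussianReal_of_tendsto_charFun (fun n => (hmeas n).aemeasurable)
    (fun s => ?_) f
  have htwist := tendsto_jumpMatrix_pow_mulVec_one henv hπ hPπ hy1 hy2 hy s
  have hstart : Tendsto (fun n : ℕ => Complex.exp (Complex.I * ((s / √n : ℝ) * Y 0 x₀))) atTop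
      (𝓝 1) := by
    have hlim : Tendsto (fun n : ℕ => s / √n) atTop (𝓝 0) :=
      (Real.tendsto_sqrt_atTop.comp tendsto_natCast_atTop_atTop).const_div_atTop s
    have hcont : Tendsto (fun θ : ℝ => Complex.exp (Complex.I * (θ * Y 0 x₀))) (𝓝 0) (𝓝 1) :=
      Continuous.tendsto' (by fun_prop) _ _ (by simp)
    exact hcont.comp hlim
  convert! hstart.mul (tendsto_pi_nhds.1 htwist (projT Md x₀)) using 2 with n
  · rw [charFun_apply_real, integral_map (hmeas n).aemeasurable (by fun_prop),
      ← hμ.integral_cexp_eq_jumpMatrix_pow_mulVec henv hY]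
    refine integral_congr_ae (.of_forall fun ω => ?_)
    push_cast
    ring_nf
  · simp

end AdditiveFunctional

section Moments

variable {Z : Type*} {w f g : Z → ℝ}

lemma summable_mul_mul_of_sq (hw : ∀ z, 0 ≤ w z) (hf : Summable fun z => w z * f z ^ 2)
    (hg : Summable fun z => w z * g z ^ 2) : Summable fun z => w z * (f z * g z) := by
  refine .of_norm_bounded (hf.add hg) fun z => ?_
  rw [Real.norm_eq_abs, abs_mul, abs_of_nonneg (hw z), ← mul_add]
  refine mul_le_mul_of_nonneg_left (abs_le.2 ⟨?_, ?_⟩) (hw z) <;>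
    nlinarith [sq_nonneg (f z + g z), sq_nonneg (f z - g z)]

lemma summable_mul_of_sq (hw : ∀ z, 0 ≤ w z) (hsum : Summable w)
    (hf : Summable fun z => w z * f z ^ 2) : Summable fun z => w z * f z := by
  simpa using summable_mul_mul_of_sq hw hf (g := fun _ => 1) (by simpa using hsum)

/-- The `i`-th coordinate of a jump of the walk, centred at the drift `ν`. -/
def centredCoord {d : ℕ} (ν : Fin d → ℝ) (i : Fin d) (z : Fin d → ℤ) : ℝ := z i - ν i

variable {d : ℕ} {w : (Fin d → ℤ) → ℝ}

lemma summable_mul_centredCoord_mul_centredCoord (hw : ∀ z, 0 ≤ w z) (hsum : Summable w)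
    (hw2 : Summable fun z => w z * (∑ i, |(z i : ℝ)|) ^ 2) (ν : Fin d → ℝ) (i j : Fin d) :
    Summable fun z => w z * (centredCoord ν i z * centredCoord ν j z) := by
  have hsq : ∀ i, Summable fun z => w z * (z i : ℝ) ^ 2 := fun i => by
    refine .of_nonneg_of_le (fun z => mul_nonneg (hw z) (sq_nonneg _)) (fun z => ?_) hw2
    rw [← sq_abs]
    gcongr
    · exact hw z
    · exact Finset.single_le_sum (f := fun i => |(z i : ℝ)|) (fun _ _ => abs_nonneg _)
        (Finset.mem_univ i)
  have hcentred : ∀ i, Summable fun z => w z * centredCoord ν i z ^ 2 := fun i =>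
    (((hsq i).sub ((summable_mul_of_sq hw hsum (hsq i)).mul_left (2 * ν i))).add
      (hsum.mul_left (ν i ^ 2))).congr fun z => by unfold centredCoord; ring
  exact summable_mul_mul_of_sq hw (hcentred i) (hcentred j)

lemma summable_mul_centredCoord (hw : ∀ z, 0 ≤ w z) (hsum : Summable w)
    (hw2 : Summable fun z => w z * (∑ i, |(z i : ℝ)|) ^ 2) (ν : Fin d → ℝ) (i : Fin d) :
    Summable fun z => w z * centredCoord ν i z :=
  summable_mul_of_sq hw hsum <| by
    simpa only [sq] using summable_mul_centredCoord_mul_centredCoord hw hsum hw2 ν i i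

end Moments

section Covariance

variable {d : ℕ} {Md : Fin d → ℕ} [∀ i, NeZero (Md i)] {p : (Fin d → ℤ) → (Fin d → ℤ) → ℝ}

lemma jumpMatrix_coord_apply (henv : IsPeriodicEnv Md p) (i : Fin d) (a b : Torus d Md) :
    jumpMatrix Md p (fun z => (z i : ℝ)) a b = indMatrix Md p a b * condJump Md p a b i := by
  unfold condJump
  split_ifs with hab
  · rw [← jumpMatrix_one] at hab
    simpa using markedMatrix_apply_eq_zero (fun _ => henv.1 _) (fun _ => (henv.2.1 _).summable)
      hab _
  · rw [mul_div_cancel₀ _ hab]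
    rfl

lemma jumpMatrix_centredCoord (henv : IsPeriodicEnv Md p) {i : Fin d}
    (hmom : ∀ a : Torus d Md, Summable fun z : Fin d → ℤ => p (repT Md a) z * z i)
    (ν : Fin d → ℝ) : jumpMatrix Md p (centredCoord ν i) =
      jumpMatrix Md p (fun z => (z i : ℝ)) - ν i • indMatrix Md p := by
  rw [← jumpMatrix_one, ← markedMatrix_const_mul, ← markedMatrix_sub hmom fun a => ?_]
  · simp only [mul_one]
    rfl
  · simpa using (henv.2.1 (repT Md a)).summable.mul_right (ν i)

variable {π : Torus d Md → ℝ}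

lemma dotProduct_jumpMatrix_centredCoord_driftVec (henv : IsPeriodicEnv Md p)
    (hπ : IsStationaryDist (indMatrix Md p) π) {i : Fin d}
    (hmom : ∀ a : Torus d Md, Summable fun z : Fin d → ℤ => p (repT Md a) z * z i) :
    π ⬝ᵥ (jumpMatrix Md p (centredCoord (driftVec Md p π) i) *ᵥ 1) = 0 := by
  have hcoord : π ⬝ᵥ (jumpMatrix Md p (fun z => (z i : ℝ)) *ᵥ 1) = driftVec Md p π i :=
    Finset.sum_congr rfl fun a _ => by rw [markedMatrix_mulVec_one hmom]; rfl
  have hone : π ⬝ᵥ (indMatrix Md p *ᵥ 1) = 1 := by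
    rw [Matrix.one_vecMul_of_mem_rowStochastic henv.indMatrix_mem_rowStochastic, dotProduct_one,
      hπ.2.1]
  rw [jumpMatrix_centredCoord henv hmom, Matrix.sub_mulVec, Matrix.smul_mulVec, dotProduct_sub,
    dotProduct_smul, hcoord, hone, smul_eq_mul, mul_one, sub_self]

lemma covSeriesTerm_eq_dotProduct (henv : IsPeriodicEnv Md p)
    (hmom : ∀ i (a : Torus d Md), Summable fun z : Fin d → ℤ => p (repT Md a) z * z i)
    (n : ℕ) (i j : Fin d) :
    covSeriesTerm Md p π n i j = π ⬝ᵥ (jumpMatrix Md p (centredCoord (driftVec Md p π) i) *ᵥ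
      (indMatrix Md p ^ n *ᵥ (jumpMatrix Md p (centredCoord (driftVec Md p π) j) *ᵥ 1))) := by
  have hentry : ∀ i a b, jumpMatrix Md p (centredCoord (driftVec Md p π) i) a b =
      indMatrix Md p a b * (condJump Md p a b i - driftVec Md p π i) := fun i a b => by
    rw [jumpMatrix_centredCoord henv (hmom i), Matrix.sub_apply, jumpMatrix_coord_apply henv,
      Matrix.smul_apply, smul_eq_mul]
    ring
  simp only [covSeriesTerm, dotProduct, Matrix.mulVec, hentry, Finset.mul_sum, Pi.one_apply]
  congr! 4
  ring

theorem summable_covSeriesTerm (henv : IsPeriodicEnv Md p)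
    (hπ : IsStationaryDist (indMatrix Md p) π) (hPπ : SatisfiesDoeblin (indMatrix Md p) π)
    (hmom : ∀ i (a : Torus d Md), Summable fun z : Fin d → ℤ => p (repT Md a) z * z i)
    (i j : Fin d) : Summable fun n => covSeriesTerm Md p π n i j := by
  simp only [covSeriesTerm_eq_dotProduct henv hmom]
  have := hasSum_mulVec_pow_mulVec (summable_pow_mulVec henv.indMatrix_mem_rowStochastic hπ hPπ
    (dotProduct_jumpMatrix_centredCoord_driftVec henv hπ (hmom j)))
    (jumpMatrix Md p (centredCoord (driftVec Md p π) i))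
  exact summable_sum fun a _ => (Pi.summable.1 this.summable a).mul_left _

lemma jumpMatrix_sum_smul_centredCoord {ν : Fin d → ℝ}
    (hmom : ∀ i (a : Torus d Md), Summable fun z => p (repT Md a) z * centredCoord ν i z)
    (t : Fin d → ℝ) : jumpMatrix Md p (fun z => ∑ i, t i * centredCoord ν i z) =
      ∑ i, t i • jumpMatrix Md p (centredCoord ν i) := by
  simp only [← markedMatrix_const_mul]
  exact markedMatrix_sum fun i _ a => by
    simpa only [smul_eq_mul, mul_left_comm] using (hmom i a).mul_left (t i)

lemma summable_mul_sum_centredCoord {w : (Fin d → ℤ) → ℝ} {ν : Fin d → ℝ}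
    (hw : ∀ i, Summable fun z => w z * centredCoord ν i z) (t : Fin d → ℝ) :
    Summable fun z => w z * ∑ i, t i * centredCoord ν i z := by
  refine (summable_sum fun i (_ : i ∈ Finset.univ) => (hw i).mul_left (t i)).congr fun z => ?_
  simp only [Finset.mul_sum, mul_left_comm (t _)]

lemma sum_mul_add_sub_succ_mul (ν t : Fin d → ℝ) (n : ℕ) (x z : Fin d → ℤ) :
    ∑ i, t i * (((x + z) i : ℝ) - (n + 1 : ℕ) * ν i) =
      ∑ i, t i * ((x i : ℝ) - n * ν i) + ∑ i, t i * centredCoord ν i z := by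
  rw [← Finset.sum_add_distrib]
  congr! 1
  simp only [centredCoord, Pi.add_apply]
  push_cast
  ring

lemma hasSum_mul_sq_sum_centredCoord {w : (Fin d → ℤ) → ℝ} {ν : Fin d → ℝ}
    (hw : ∀ i j, Summable fun z => w z * (centredCoord ν i z * centredCoord ν j z))
    (t : Fin d → ℝ) :
    HasSum (fun z => w z * (∑ i, t i * centredCoord ν i z) ^ 2)
      (∑ i, ∑ j, t i * t j * ∑' z, w z * (centredCoord ν i z * centredCoord ν j z)) := by
  convert! hasSum_sum fun i _ => hasSum_sum fun j _ => (hw i j).hasSum.mul_left (t i * t j) using 2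
    with z
  rw [sq, Finset.sum_mul_sum]
  simp only [Finset.mul_sum]
  congr! 2
  ring

lemma dotProduct_jumpMatrix_sum_centredCoord (henv : IsPeriodicEnv Md p)
    (hπ : IsStationaryDist (indMatrix Md p) π)
    (hmom : ∀ (ν : Fin d → ℝ) i (a : Torus d Md), Summable fun z =>
      p (repT Md a) z * centredCoord ν i z) (t : Fin d → ℝ) :
    π ⬝ᵥ (jumpMatrix Md p (fun z => ∑ i, t i * centredCoord (driftVec Md p π) i z) *ᵥ 1) = 0 := by
  rw [jumpMatrix_sum_smul_centredCoord (hmom _), Matrix.sum_mulVec, dotProduct_sum]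
  refine Finset.sum_eq_zero fun i _ => ?_
  rw [Matrix.smul_mulVec, dotProduct_smul,
    dotProduct_jumpMatrix_centredCoord_driftVec henv hπ (by simpa [centredCoord] using hmom 0 i),
    smul_zero]

lemma dotProduct_jumpMatrix_sq_sum_centredCoord {ν : Fin d → ℝ}
    (hmom2 : ∀ i j (a : Torus d Md), Summable fun z =>
      p (repT Md a) z * (centredCoord ν i z * centredCoord ν j z)) (t : Fin d → ℝ) :
    π ⬝ᵥ (jumpMatrix Md p (fun z => (∑ i, t i * centredCoord ν i z) ^ 2) *ᵥ 1) =
      ∑ i, ∑ j, t i * (∑ a, π a * ∑' z : Fin d → ℤ,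
        p (repT Md a) z * ((z i : ℝ) - ν i) * ((z j : ℝ) - ν j)) * t j := by
  have hrow : ∀ a, (jumpMatrix Md p (fun z => (∑ i, t i * centredCoord ν i z) ^ 2) *ᵥ 1) a =
      ∑ i, ∑ j, t i * t j * ∑' z, p (repT Md a) z * (centredCoord ν i z * centredCoord ν j z) :=
    fun a => by
      have hsum := fun a => hasSum_mul_sq_sum_centredCoord (fun i j => hmom2 i j a) t
      rw [markedMatrix_mulVec_one fun a => (hsum a).summable]
      exact (hsum a).tsum_eq
  rw [dotProduct]
  simp only [hrow, Finset.mul_sum, Finset.sum_mul]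
  rw [Finset.sum_comm]
  refine Finset.sum_congr rfl fun i _ => ?_
  rw [Finset.sum_comm]
  refine Finset.sum_congr rfl fun j _ => Finset.sum_congr rfl fun a _ => ?_
  simp only [centredCoord, ← mul_assoc]
  ring

lemma dotProduct_jumpMatrix_sum_centredCoord_potential (henv : IsPeriodicEnv Md p)
    (hπ : IsStationaryDist (indMatrix Md p) π) (hPπ : SatisfiesDoeblin (indMatrix Md p) π)
    (hmom : ∀ (ν : Fin d → ℝ) i (a : Torus d Md), Summable fun z =>
      p (repT Md a) z * centredCoord ν i z) (t : Fin d → ℝ) {Q : Matrix (Torus d Md) (Torus d Md) ℝ}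
    (hQ : Q = jumpMatrix Md p (fun z => ∑ i, t i * centredCoord (driftVec Md p π) i z)) :
    π ⬝ᵥ (Q *ᵥ potential (indMatrix Md p) (Q *ᵥ 1)) =
      ∑ i, ∑ j, t i * (∑' n, covSeriesTerm Md p π n i j) * t j := by
  have hcoord : ∀ i (a : Torus d Md), Summable fun z : Fin d → ℤ => p (repT Md a) z * z i := by
    simpa [centredCoord] using hmom 0
  have hpot := hasSum_mulVec_pow_mulVec (summable_pow_mulVec henv.indMatrix_mem_rowStochastic hπ hPπ
    (hQ ▸ dotProduct_jumpMatrix_sum_centredCoord henv hπ hmom t)) Q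
  have hcov := hasSum_sum fun i (_ : i ∈ Finset.univ) => hasSum_sum fun j (_ : j ∈ Finset.univ) =>
    ((summable_covSeriesTerm henv hπ hPπ hcoord i j).hasSum.mul_left (t i)).mul_right (t j)
  refine (hasSum_sum fun a _ => (Pi.hasSum.1 hpot a).mul_left (π a)).unique
    (hcov.congr_fun fun n => ?_)
  change π ⬝ᵥ (Q *ᵥ (indMatrix Md p ^ n *ᵥ (Q *ᵥ 1))) = _
  simp only [hQ, jumpMatrix_sum_smul_centredCoord (hmom _), Matrix.sum_mulVec, Matrix.mulVec_sum,
    Matrix.smul_mulVec, Matrix.mulVec_smul, dotProduct_sum, dotProduct_smul, smul_eq_mul,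
    covSeriesTerm_eq_dotProduct henv hcoord, Finset.mul_sum]
  rw [Finset.sum_comm]
  congr! 2
  ring

theorem limitVariance_eq_sum_covSigma (henv : IsPeriodicEnv Md p)
    (hπ : IsStationaryDist (indMatrix Md p) π) (hPπ : SatisfiesDoeblin (indMatrix Md p) π)
    (hmom : ∀ (ν : Fin d → ℝ) i (a : Torus d Md), Summable fun z =>
      p (repT Md a) z * centredCoord ν i z)
    (hmom2 : ∀ i j (a : Torus d Md), Summable fun z => p (repT Md a) z *
      (centredCoord (driftVec Md p π) i z * centredCoord (driftVec Md p π) j z))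
    (t : Fin d → ℝ) :
    limitVariance (indMatrix Md p)
      (jumpMatrix Md p fun z => ∑ i, t i * centredCoord (driftVec Md p π) i z)
      (jumpMatrix Md p fun z => (∑ i, t i * centredCoord (driftVec Md p π) i z) ^ 2) π =
      ∑ i, ∑ j, t i * covSigma Md p π i j * t j := by
  rw [limitVariance, dotProduct_jumpMatrix_sq_sum_centredCoord hmom2,
    dotProduct_jumpMatrix_sum_centredCoord_potential henv hπ hPπ hmom t rfl]
  simp only [covSigma, Finset.mul_sum (Finset.univ : Finset (Fin d)), ← Finset.sum_add_distrib]
  congr! 2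
  ring

end Covariance

theorem rwpe_clt_general (d : ℕ) (Md : Fin d → ℕ) [∀ i, NeZero (Md i)]
    (p : (Fin d → ℤ) → (Fin d → ℤ) → ℝ) (henv : IsPeriodicEnv Md p)
    (π : Torus d Md → ℝ) (hπ : IsStationaryDist (indMatrix Md p) π)
    (hPπ : SatisfiesDoeblin (indMatrix Md p) π)
    (hmom2 : ∀ t : Torus d Md,
      Summable (fun y : Fin d → ℤ => p (repT Md t) y * (∑ i, |(y i : ℝ)|) ^ 2))
    (x₀ : Fin d → ℤ) (μ : Measure (ℕ → (Fin d → ℤ))) (hμ : IsRWPELaw p x₀ μ) :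
    (∀ i j : Fin d, Summable (fun n : ℕ => covSeriesTerm Md p π n i j)) ∧
    ∀ t : Fin d → ℝ, ∀ f : BoundedContinuousFunction ℝ ℝ,
      Tendsto (fun n : ℕ =>
          ∫ ω, f (∑ i, t i * (((ω n i : ℝ) - n * driftVec Md p π i) / Real.sqrt n)) ∂μ)
        atTop
        (𝓝 (∫ x, f x ∂(gaussianReal 0
          (∑ i, ∑ j, t i * covSigma Md p π i j * t j).toNNReal))) := by
  set ν := driftVec Md p π
  have hmom : ∀ (ν : Fin d → ℝ) i (a : Torus d Md), Summable fun z =>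
      p (repT Md a) z * centredCoord ν i z := fun ν i a =>
    summable_mul_centredCoord (henv.1 _) (henv.2.1 _).summable (hmom2 a) ν i
  have hcoord : ∀ i (a : Torus d Md), Summable fun z : Fin d → ℤ => p (repT Md a) z * z i := by
    simpa [centredCoord] using hmom 0
  have hcov : ∀ i j (a : Torus d Md), Summable fun z =>
      p (repT Md a) z * (centredCoord ν i z * centredCoord ν j z) := fun i j a =>
    summable_mul_centredCoord_mul_centredCoord (henv.1 _) (henv.2.1 _).summable (hmom2 a) ν i j
  refine ⟨summable_covSeriesTerm henv hπ hPπ hcoord, fun t f => ?_⟩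
  rw [← limitVariance_eq_sum_covSigma henv hπ hPπ hmom hcov t]
  simpa only [Finset.sum_div, mul_div_assoc] using
    hμ.tendsto_integral_additive_functional henv hπ hPπ
      (Y := fun n x => ∑ i, t i * ((x i : ℝ) - n * ν i))
      (sum_mul_add_sub_succ_mul ν t) (fun a => summable_mul_sum_centredCoord (hmom ν · a) t)
      (fun a => (hasSum_mul_sq_sum_centredCoord (fun i j => hcov i j a) t).summable)
      (dotProduct_jumpMatrix_sum_centredCoord henv hπ hmom t) f

/-- **Central limit theorem for RWPE.** If the induced chain on the torus is irreducible
and aperiodic with stationary distribution `π` and the jump distributions have finite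
second moments, then `(Xₙ - nν)/√n` converges in distribution to the centered Gaussian
law `N(0, Σ)`; the correlation series defining `Σ` converges. Convergence in
distribution to `N(0, Σ)` is expressed, via the Cramér–Wold device, as weak
convergence of every linear functional `⟨t, (Xₙ - nν)/√n⟩` to the one-dimensional
Gaussian law `N(0, ⟨t, Σ t⟩)`. -/
theorem rwpe_clt (d : ℕ) (hd : 0 < d) (Md : Fin d → ℕ) [∀ i, NeZero (Md i)]
    (p : (Fin d → ℤ) → (Fin d → ℤ) → ℝ) (henv : IsPeriodicEnv Md p)
    (hirr : MatIrreducible (indMatrix Md p)) (haper : MatAperiodic (indMatrix Md p))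
    (π : Torus d Md → ℝ) (hπ : IsStationaryDist (indMatrix Md p) π)
    (hmom2 : ∀ t : Torus d Md,
      Summable (fun y : Fin d → ℤ => p (repT Md t) y * (∑ i, |(y i : ℝ)|) ^ 2))
    (μ : Measure (ℕ → (Fin d → ℤ))) (hμ : IsRWPELaw p 0 μ) :
    (∀ i j : Fin d, Summable (fun n : ℕ => covSeriesTerm Md p π n i j)) ∧
    ∀ t : Fin d → ℝ, ∀ f : BoundedContinuousFunction ℝ ℝ,
      Tendsto (fun n : ℕ =>
          ∫ ω, f (∑ i, t i * (((ω n i : ℝ) - n * driftVec Md p π i) / Real.sqrt n)) ∂μ)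
        atTop
        (𝓝 (∫ x, f x ∂(gaussianReal 0
          (∑ i, ∑ j, t i * covSigma Md p π i j * t j).toNNReal))) :=
  rwpe_clt_general d Md p henv π hπ (.of_isPrimitive (isPrimitive_of_irreducible_of_aperiodic
    henv.indMatrix_mem_rowStochastic.1 hirr haper) hπ.le_one) hmom2 0 μ hμ
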